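/- arXiv:1610.00817 — 2 statements merged into one kernel-verified Lean document; each statement's English description precedes it below -/
import Mathlib

section
/- For every integer n ≥ 1, the set Vₙ of all functions f : ℂ ∖ L → ℂ that are holomorphic, doubly periodic, and such that z ↦ zⁿ·f(z) extends holomorphically across 0 (i.e. there exist ε > 0 and a holomorphic g on B(0,ε) with g(z) = zⁿ·f(z) for all z ∈ B(0,ε) ∖ {0}) is a ℂ-linear subspace of the space of all functions ℂ ∖ L → ℂ, and its dimension over ℂ equals n. (This is the space of elliptic functions with poles only at the lattice points, of order at most n; in the paper it is spanned by 1, ℘, ℘′, …, ℘^{(n−2)}.) -/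
open Metric Filter

/-- The extension by `0` of a function defined on the complement of the lattice `L`
to a function on all of `ℂ`. -/
noncomputable def latticeExt (L : Set ℂ) (f : ↥(Lᶜ) → ℂ) : ℂ → ℂ :=
  Function.extend Subtype.val f 0

/-!
Sending a function of `Vₙ` to its coefficient of `z⁻ⁿ` at `0` is linear, with kernel `Vₙ₋₁` by the
removable singularity theorem. It is surjective for `n ≥ 2`, as the products `℘ᵃ ℘′ᵇ` have poles of
every order `2a + 3b ≥ 2`, and `V₀` consists of the constants by Liouville's theorem. So everything
rests on `V₁ = V₀`: an elliptic function has no single simple pole. Subtracting a constant makes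
such an `F` odd, hence zero at every half period. Then `F(z) F(z + ω₁/2)` has period `ω₁/2`, and
its pole at `0` is cancelled by the zero of the second factor, so it is constant; as it vanishes
at `ω₂/2`, it is zero, and thus so is `F`.
-/

open Topology

/-! ### Polar coefficients at the origin -/

/-- `F` has a pole of order at most `n` at `0`, with coefficient `c` of `z⁻ⁿ`. For `F` holomorphic
near but not at `0`, the limit says that `zⁿ F(z)` extends holomorphically by the value `c`. -/
def HasPolarCoeff (F : ℂ → ℂ) (n : ℕ) (c : ℂ) : Prop :=
  Tendsto (fun z ↦ z ^ n * F z) (𝓝[≠] 0) (𝓝 c)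

namespace HasPolarCoeff

variable {F G : ℂ → ℂ} {n m : ℕ} {c d : ℂ}

lemma unique (hc : HasPolarCoeff F n c) (hd : HasPolarCoeff F n d) : c = d :=
  tendsto_nhds_unique hc hd

lemma congr' (h : HasPolarCoeff F n c) (hFG : F =ᶠ[𝓝[≠] 0] G) : HasPolarCoeff G n c :=
  Tendsto.congr' (hFG.mono fun z hz ↦ by rw [hz]) h

lemma add (hF : HasPolarCoeff F n c) (hG : HasPolarCoeff G n d) :
    HasPolarCoeff (F + G) n (c + d) :=
  (Tendsto.add hF hG).congr fun z ↦ by simp only [Pi.add_apply]; ring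

lemma mul (hF : HasPolarCoeff F n c) (hG : HasPolarCoeff G m d) :
    HasPolarCoeff (F * G) (n + m) (c * d) :=
  (Tendsto.mul hF hG).congr fun z ↦ by simp only [Pi.mul_apply]; ring

lemma pow (hF : HasPolarCoeff F n c) (a : ℕ) : HasPolarCoeff (F ^ a) (n * a) (c ^ a) :=
  (Tendsto.pow hF a).congr fun z ↦ by simp only [Pi.pow_apply]; ring

lemma const_smul (a : ℂ) (hF : HasPolarCoeff F n c) : HasPolarCoeff (a • F) n (a * c) :=
  (Tendsto.const_mul a hF).congr fun z ↦ by simp only [Pi.smul_apply, smul_eq_mul]; ring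

lemma succ (hF : HasPolarCoeff F n c) : HasPolarCoeff F (n + 1) 0 := by
  have hid : Tendsto (fun z : ℂ ↦ z) (𝓝[≠] 0) (𝓝 0) := tendsto_id.mono_left nhdsWithin_le_nhds
  simpa [HasPolarCoeff, pow_succ', mul_assoc] using hid.mul hF

lemma comp_neg (hF : HasPolarCoeff F n c) :
    HasPolarCoeff (fun z ↦ F (-z)) n ((-1) ^ n * c) := by
  have hneg : Tendsto (fun z : ℂ ↦ -z) (𝓝[≠] 0) (𝓝[≠] 0) :=
    tendsto_nhdsWithin_iff.mpr ⟨(continuous_neg.tendsto' 0 0 neg_zero).mono_left nhdsWithin_le_nhds,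
      eventually_mem_nhdsWithin.mono fun _ ↦ neg_ne_zero.mpr⟩
  refine ((hF.comp hneg).const_mul ((-1) ^ n)).congr fun z ↦ ?_
  simp only [Function.comp_apply, ← mul_assoc, ← mul_pow, neg_one_mul, neg_neg]

lemma of_continuousAt (hF : ContinuousAt F 0) : HasPolarCoeff F 0 (F 0) := by
  simpa [HasPolarCoeff] using hF.tendsto.mono_left nhdsWithin_le_nhds

lemma exists_of_succ_zero (hd : ∀ᶠ z in 𝓝[≠] 0, DifferentiableAt ℂ F z)
    (h : HasPolarCoeff F (n + 1) 0) : ∃ c, HasPolarCoeff F n c := by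
  set u : ℂ → ℂ := fun z ↦ z ^ n * F z
  have hu : u =o[𝓝[≠] 0] fun z ↦ (z - 0)⁻¹ := by
    refine (Asymptotics.isLittleO_iff_tendsto' ?_).mpr (h.congr fun z ↦ ?_)
    · filter_upwards [self_mem_nhdsWithin] with z hz hz'
      simp_all
    · simp only [u, sub_zero, div_inv_eq_mul]
      ring
  have hconst : (fun _ : ℂ ↦ u 0) =o[𝓝[≠] 0] fun z ↦ (z - 0)⁻¹ := by
    refine (Asymptotics.isLittleO_const_left).mpr (.inr ?_)
    simpa [Function.comp_def] using tendsto_norm_inv_nhdsNE_zero_atTop (α := ℂ)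
  exact ⟨_, Complex.tendsto_limUnder_of_differentiable_on_punctured_nhds_of_isLittleO
    (hd.mono fun z hz ↦ (differentiableAt_id.pow n).mul hz) (hu.sub hconst)⟩

lemma differentiableOn_update {s : Set ℂ} (hs : s ∈ 𝓝 0) (hd : DifferentiableOn ℂ F (s \ {0}))
    (h : HasPolarCoeff F n c) :
    DifferentiableOn ℂ (Function.update (fun z ↦ z ^ n * F z) 0 c) s := by
  refine (Complex.differentiableOn_compl_singleton_and_continuousAt_iff hs).mp
    ⟨?_, continuousAt_update_same.mpr h⟩
  refine ((differentiable_pow n).differentiableOn.mul hd).congr fun z hz ↦ ?_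
  exact Function.update_of_ne hz.2 _ _

lemma of_differentiableOn_ball {g : ℂ → ℂ} {ε : ℝ} (hε : 0 < ε)
    (hg : DifferentiableOn ℂ g (ball 0 ε)) (hgF : ∀ z ∈ ball 0 ε \ {0}, g z = z ^ n * F z) :
    HasPolarCoeff F n (g 0) := by
  have hball : ball (0 : ℂ) ε ∈ 𝓝 0 := ball_mem_nhds 0 hε
  refine ((hg.differentiableAt hball).continuousAt.tendsto.mono_left nhdsWithin_le_nhds).congr' ?_
  filter_upwards [sdiff_mem_nhdsWithin_compl hball {0}] with z hz using hgF z hz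

end HasPolarCoeff

/-! ### Elliptic functions with poles in the lattice -/

/-- `F` is elliptic with respect to the lattice of `Λ`, with all its poles at lattice points. The
values of `F` at the lattice points are junk, but have to be periodic as well. -/
structure IsElliptic (Λ : PeriodPair) (F : ℂ → ℂ) : Prop where
  differentiableOn : DifferentiableOn ℂ F (Λ.lattice : Set ℂ)ᶜ
  periodic_ω₁ : F.Periodic Λ.ω₁
  periodic_ω₂ : F.Periodic Λ.ω₂

variable {Λ : PeriodPair} {F G : ℂ → ℂ} {c : ℂ}

lemma eventually_notMem_lattice (Λ : PeriodPair) : ∀ᶠ z in 𝓝[≠] (0 : ℂ), z ∉ Λ.lattice := by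
  filter_upwards [mem_nhdsWithin_of_mem_nhds (Λ.compl_lattice_sdiff_singleton_mem_nhds 0),
    self_mem_nhdsWithin] with z hz hz0 hzΛ using hz ⟨hzΛ, hz0⟩

lemma isPreconnected_compl_lattice (Λ : PeriodPair) : IsPreconnected (Λ.lattice : Set ℂ)ᶜ := by
  have : Countable Λ.lattice := Λ.latticeEquivProd.toEquiv.countable_iff.mpr inferInstance
  exact (Set.to_countable (Λ.lattice : Set ℂ)).isConnected_compl_of_one_lt_rank
    (by simp) |>.isPreconnected

namespace IsElliptic

lemma periodic (hF : IsElliptic Λ F) {l : ℂ} (hl : l ∈ Λ.lattice) : F.Periodic l := by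
  obtain ⟨a, b, rfl⟩ := PeriodPair.mem_lattice.mp hl
  exact (hF.periodic_ω₁.int_mul a).add_period (hF.periodic_ω₂.int_mul b)

lemma analyticOnNhd (hF : IsElliptic Λ F) : AnalyticOnNhd ℂ F (Λ.lattice : Set ℂ)ᶜ :=
  hF.differentiableOn.analyticOnNhd Λ.isClosed_lattice.isOpen_compl

lemma eventually_differentiableAt (hF : IsElliptic Λ F) :
    ∀ᶠ z in 𝓝[≠] 0, DifferentiableAt ℂ F z :=
  (eventually_notMem_lattice Λ).mono fun z hz ↦ (hF.analyticOnNhd z hz).differentiableAt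

lemma const (Λ : PeriodPair) (c : ℂ) : IsElliptic Λ fun _ ↦ c :=
  ⟨differentiableOn_const c, fun _ ↦ rfl, fun _ ↦ rfl⟩

lemma add (hF : IsElliptic Λ F) (hG : IsElliptic Λ G) : IsElliptic Λ (F + G) :=
  ⟨hF.differentiableOn.add hG.differentiableOn, hF.periodic_ω₁.add hG.periodic_ω₁,
    hF.periodic_ω₂.add hG.periodic_ω₂⟩

lemma mul (hF : IsElliptic Λ F) (hG : IsElliptic Λ G) : IsElliptic Λ (F * G) :=
  ⟨hF.differentiableOn.mul hG.differentiableOn, hF.periodic_ω₁.mul hG.periodic_ω₁,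
    hF.periodic_ω₂.mul hG.periodic_ω₂⟩

lemma pow (hF : IsElliptic Λ F) (a : ℕ) : IsElliptic Λ (F ^ a) :=
  ⟨hF.differentiableOn.pow a, hF.periodic_ω₁.comp (· ^ a), hF.periodic_ω₂.comp (· ^ a)⟩

lemma const_smul (a : ℂ) (hF : IsElliptic Λ F) : IsElliptic Λ (a • F) :=
  ⟨hF.differentiableOn.const_smul a, hF.periodic_ω₁.smul a, hF.periodic_ω₂.smul a⟩

lemma comp_neg (hF : IsElliptic Λ F) : IsElliptic Λ fun z ↦ F (-z) where
  differentiableOn := hF.differentiableOn.comp (differentiableOn_neg _) fun z hz ↦ by simpa using hz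
  periodic_ω₁ z := by simpa [← sub_eq_add_neg, add_comm] using hF.periodic_ω₁.sub_eq (-z)
  periodic_ω₂ z := by simpa [← sub_eq_add_neg, add_comm] using hF.periodic_ω₂.sub_eq (-z)

open Classical in
lemma eq_of_hasPolarCoeff_zero (hF : IsElliptic Λ F) (h : HasPolarCoeff F 0 c) {z : ℂ}
    (hz : z ∉ Λ.lattice) : F z = c := by
  -- `H` extends `F` across the lattice to a bounded entire function.
  set H : ℂ → ℂ := fun z ↦ if z ∈ Λ.lattice then c else F z with hH
  have H_periodic (z l : ℂ) (hl : l ∈ Λ.lattice) : H (z + l) = H z := by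
    simp only [hH, Λ.lattice.add_mem_iff_left hl, hF.periodic hl z]
  have H_eq {x : ℂ} (hx : x ∉ Λ.lattice) : H =ᶠ[𝓝 x] F := by
    filter_upwards [Λ.isClosed_lattice.isOpen_compl.mem_nhds hx] with y hy using if_neg hy
  have H_continuousAt_zero : ContinuousAt H 0 := by
    rw [continuousAt_iff_punctured_nhds, show H 0 = c from if_pos (zero_mem _)]
    refine Tendsto.congr' ?_ h
    filter_upwards [eventually_notMem_lattice Λ] with y hy
    simp only [hH, if_neg hy, pow_zero, one_mul]
  have H_differentiableAt_zero : DifferentiableAt ℂ H 0 := by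
    refine (Complex.analyticAt_of_differentiable_on_punctured_nhds_of_continuousAt ?_
      H_continuousAt_zero).differentiableAt
    filter_upwards [eventually_notMem_lattice Λ, hF.eventually_differentiableAt] with y hy hFy
    exact hFy.congr_of_eventuallyEq (H_eq hy)
  have H_differentiable : Differentiable ℂ H := fun x ↦ by
    by_cases hx : x ∈ Λ.lattice
    · have H_shift : H = fun y ↦ H (y - x) := funext fun y ↦ by
        simpa using H_periodic (y - x) x hx
      rw [H_shift]
      exact (differentiableAt_comp_sub_const (a := x) (b := x)).mpr (by simpa)
    · exact (hF.analyticOnNhd x hx).differentiableAt.congr_of_eventuallyEq (H_eq hx)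
  have H_bounded := (IsZLattice.isCompact_range_of_periodic Λ.lattice H
    H_differentiable.continuous H_periodic).isBounded
  simpa [hH, hz] using H_differentiable.apply_eq_apply_of_bounded H_bounded z 0

lemma weierstrassP (Λ : PeriodPair) : IsElliptic Λ Λ.weierstrassP :=
  ⟨Λ.differentiableOn_weierstrassP, Λ.periodic_weierstrassP ⟨_, Λ.ω₁_mem_lattice⟩,
    Λ.periodic_weierstrassP ⟨_, Λ.ω₂_mem_lattice⟩⟩

lemma derivWeierstrassP (Λ : PeriodPair) : IsElliptic Λ Λ.derivWeierstrassP :=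
  ⟨Λ.differentiableOn_derivWeierstrassP, Λ.periodic_derivWeierstrassP ⟨_, Λ.ω₁_mem_lattice⟩,
    Λ.periodic_derivWeierstrassP ⟨_, Λ.ω₂_mem_lattice⟩⟩

end IsElliptic

lemma hasPolarCoeff_weierstrassP (Λ : PeriodPair) : HasPolarCoeff Λ.weierstrassP 2 1 := by
  have hcont : ContinuousAt (fun z ↦ z ^ 2 * Λ.weierstrassPExcept 0 z + 1) 0 := by
    have := (Λ.analyticAt_weierstrassPExcept 0).continuousAt
    fun_prop
  have hlim := hcont.tendsto.mono_left (nhdsWithin_le_nhds (s := {0}ᶜ))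
  simp only [ne_eq, OfNat.ofNat_ne_zero, not_false_eq_true, zero_pow, zero_mul, zero_add] at hlim
  refine hlim.congr' ?_
  filter_upwards [self_mem_nhdsWithin] with z (hz : z ≠ 0)
  have := Λ.weierstrassPExcept_add 0 z
  simp only [ZeroMemClass.coe_zero, sub_zero] at this
  rw [← this]
  field_simp
  simp

lemma hasPolarCoeff_derivWeierstrassP (Λ : PeriodPair) :
    HasPolarCoeff Λ.derivWeierstrassP 3 (-2) := by
  have hcont : ContinuousAt (fun z ↦ z ^ 3 * Λ.derivWeierstrassPExcept 0 z - 2) 0 := by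
    have := (Λ.analyticAt_derivWeierstrassPExcept 0).continuousAt
    fun_prop
  have hlim := hcont.tendsto.mono_left (nhdsWithin_le_nhds (s := {0}ᶜ))
  simp only [ne_eq, OfNat.ofNat_ne_zero, not_false_eq_true, zero_pow, zero_mul, zero_sub] at hlim
  refine hlim.congr' ?_
  filter_upwards [self_mem_nhdsWithin] with z (hz : z ≠ 0)
  have := Λ.derivWeierstrassPExcept_sub 0 z
  simp only [ZeroMemClass.coe_zero, sub_zero] at this
  rw [← this]
  field_simp

lemma exists_isElliptic_hasPolarCoeff_ne_zero (Λ : PeriodPair) {n : ℕ} (hn : n ≠ 1) :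
    ∃ F c, IsElliptic Λ F ∧ HasPolarCoeff F n c ∧ c ≠ 0 := by
  obtain ⟨a, b, rfl⟩ : ∃ a b, n = 2 * a + 3 * b := by
    rcases n.even_or_odd' with ⟨k, rfl | rfl⟩
    · exact ⟨k, 0, by lia⟩
    · exact ⟨k - 1, 1, by lia⟩
  exact ⟨_, _, ((IsElliptic.weierstrassP Λ).pow a).mul ((IsElliptic.derivWeierstrassP Λ).pow b),
    ((hasPolarCoeff_weierstrassP Λ).pow a).mul ((hasPolarCoeff_derivWeierstrassP Λ).pow b),
    by simp⟩

/-! ### Simple poles -/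

/-- The period pair `(ω₁ / 2, ω₂)`, for whose lattice the product `F(z) F(z + ω₁/2)` is elliptic
whenever `F` is elliptic for `(ω₁, ω₂)`. -/
noncomputable def halfPeriodPair (Λ : PeriodPair) : PeriodPair where
  ω₁ := Λ.ω₁ / 2
  ω₂ := Λ.ω₂
  indep := by
    have := (LinearIndependent.pair_smul_smul_iff (u := (2⁻¹ : ℝ)) (v := 1)
      (by simp) isUnit_one).mpr Λ.indep
    simpa [div_eq_inv_mul] using this

lemma lattice_le_lattice_halfPeriodPair (Λ : PeriodPair) :
    Λ.lattice ≤ (halfPeriodPair Λ).lattice := by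
  refine Submodule.span_le.mpr (Set.pair_subset ?_ (halfPeriodPair Λ).ω₂_mem_lattice)
  simpa [halfPeriodPair] using
    add_mem (halfPeriodPair Λ).ω₁_mem_lattice (halfPeriodPair Λ).ω₁_mem_lattice

lemma add_half_period_notMem_lattice {z : ℂ} (hz : z ∉ (halfPeriodPair Λ).lattice) :
    z + Λ.ω₁ / 2 ∉ Λ.lattice := fun h ↦
  hz <| by simpa [halfPeriodPair] using
    sub_mem (lattice_le_lattice_halfPeriodPair Λ h) (halfPeriodPair Λ).ω₁_mem_lattice

namespace IsElliptic

lemma exists_odd_add_const (hF : IsElliptic Λ F) (h : HasPolarCoeff F 1 c) :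
    ∃ a, ∀ z ∉ Λ.lattice, F (-z) + a = -(F z + a) := by
  have hsum : HasPolarCoeff (F + fun z ↦ F (-z)) 1 0 := by simpa using h.add h.comp_neg
  have hE := hF.add hF.comp_neg
  obtain ⟨d, hd⟩ := hsum.exists_of_succ_zero hE.eventually_differentiableAt
  refine ⟨-d / 2, fun z hz ↦ ?_⟩
  have : F z + F (-z) = d := hE.eq_of_hasPolarCoeff_zero hd hz
  linear_combination this

lemma eq_zero_of_odd_of_half_period (hF : IsElliptic Λ F) (hodd : ∀ z ∉ Λ.lattice, F (-z) = -F z)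
    {l : ℂ} (hl : l ∈ Λ.lattice) (hl2 : l / 2 ∉ Λ.lattice) : F (l / 2) = 0 := by
  have hper : F (l / 2) = F (-(l / 2)) := by
    rw [← hF.periodic hl (-(l / 2))]
    congr 1
    ring
  linear_combination (hper + hodd _ hl2) / 2

lemma mul_add_half_period (hF : IsElliptic Λ F) :
    IsElliptic (halfPeriodPair Λ) fun z ↦ F z * F (z + Λ.ω₁ / 2) where
  differentiableOn :=
    (hF.differentiableOn.mono
      (Set.compl_subset_compl.mpr (lattice_le_lattice_halfPeriodPair Λ))).mul
      (hF.differentiableOn.comp (by fun_prop) fun _ hz ↦ add_half_period_notMem_lattice hz)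
  periodic_ω₁ z := by
    simp only [halfPeriodPair, add_assoc, add_halves, hF.periodic_ω₁ z, mul_comm]
  periodic_ω₂ z := by
    simp only [halfPeriodPair, add_right_comm z Λ.ω₂, hF.periodic_ω₂ _]

lemma mul_add_half_period_eq_zero_of_odd (hF : IsElliptic Λ F) (h : HasPolarCoeff F 1 c)
    (hodd : ∀ z ∉ Λ.lattice, F (-z) = -F z) {z : ℂ} (hz : z ∉ (halfPeriodPair Λ).lattice) :
    F z * F (z + Λ.ω₁ / 2) = 0 := by
  have hzero₁ : F (Λ.ω₁ / 2) = 0 :=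
    hF.eq_zero_of_odd_of_half_period hodd Λ.ω₁_mem_lattice Λ.ω₁_div_two_notMem_lattice
  have hzero₂ : F (Λ.ω₂ / 2) = 0 :=
    hF.eq_zero_of_odd_of_half_period hodd Λ.ω₂_mem_lattice Λ.ω₂_div_two_notMem_lattice
  have hshift : HasPolarCoeff (fun z ↦ F (z + Λ.ω₁ / 2)) 0 0 := by
    have hcont : ContinuousAt (fun z ↦ F (z + Λ.ω₁ / 2)) 0 := by
      refine ContinuousAt.comp' (g := F) ?_ (by fun_prop)
      simpa using (hF.analyticOnNhd _ Λ.ω₁_div_two_notMem_lattice).continuousAt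
    simpa [hzero₁] using HasPolarCoeff.of_continuousAt hcont
  have hprod : HasPolarCoeff (fun z ↦ F z * F (z + Λ.ω₁ / 2)) (0 + 1) 0 := by
    simpa using! h.mul hshift
  have hE := hF.mul_add_half_period
  obtain ⟨d, hd⟩ := hprod.exists_of_succ_zero hE.eventually_differentiableAt
  have hd0 : F (Λ.ω₂ / 2) * F (Λ.ω₂ / 2 + Λ.ω₁ / 2) = d :=
    hE.eq_of_hasPolarCoeff_zero hd (halfPeriodPair Λ).ω₂_div_two_notMem_lattice
  rw [hE.eq_of_hasPolarCoeff_zero hd hz, ← hd0, hzero₂, zero_mul]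

lemma eq_zero_of_odd (hF : IsElliptic Λ F) (h : HasPolarCoeff F 1 c)
    (hodd : ∀ z ∉ Λ.lattice, F (-z) = -F z) {z : ℂ} (hz : z ∉ (halfPeriodPair Λ).lattice) :
    F z = 0 := by
  have hF_analytic : AnalyticOnNhd ℂ F ((halfPeriodPair Λ).lattice : Set ℂ)ᶜ :=
    hF.analyticOnNhd.mono (Set.compl_subset_compl.mpr (lattice_le_lattice_halfPeriodPair Λ))
  have hshift_analytic :
      AnalyticOnNhd ℂ (fun z ↦ F (z + Λ.ω₁ / 2)) ((halfPeriodPair Λ).lattice : Set ℂ)ᶜ :=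
    fun z hz ↦ (hF.analyticOnNhd _ (add_half_period_notMem_lattice hz)).fun_comp
      (f := fun z ↦ z + Λ.ω₁ / 2) (by fun_prop)
  rcases hF_analytic.eq_zero_or_eq_zero_of_mul_eq_zero hshift_analytic
    (fun z hz ↦ hF.mul_add_half_period_eq_zero_of_odd h hodd hz)
    (isPreconnected_compl_lattice _) with hzero | hzero
  · exact hzero z hz
  · have hz' : z + Λ.ω₁ / 2 ∉ (halfPeriodPair Λ).lattice := fun h ↦
      hz ((Submodule.add_mem_iff_left _ (halfPeriodPair Λ).ω₁_mem_lattice).mp h)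
    simpa [add_assoc, hF.periodic_ω₁ z] using hzero _ hz'

lemma eq_zero_of_hasPolarCoeff_one (hF : IsElliptic Λ F) (h : HasPolarCoeff F 1 c) : c = 0 := by
  obtain ⟨a, hodd⟩ := hF.exists_odd_add_const h
  have hE : IsElliptic Λ (F + fun _ ↦ a) := hF.add (const Λ a)
  have hcoeff : HasPolarCoeff (F + fun _ ↦ a) 1 c := by
    simpa using h.add (HasPolarCoeff.of_continuousAt (continuousAt_const (y := a))).succ
  have hzero : F + (fun _ ↦ a) =ᶠ[𝓝[≠] 0] 0 := by
    filter_upwards [eventually_notMem_lattice (halfPeriodPair Λ)] with z hz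
    exact hE.eq_zero_of_odd hcoeff hodd hz
  exact (hcoeff.congr' hzero).unique (by simp [HasPolarCoeff])

end IsElliptic

/-! ### The spaces `Vₙ` -/

section latticeExt

variable {L : Set ℂ}

lemma latticeExt_apply (f : ↥Lᶜ → ℂ) {z : ℂ} (hz : z ∈ Lᶜ) : latticeExt L f z = f ⟨z, hz⟩ :=
  Subtype.val_injective.extend_apply f 0 ⟨z, hz⟩

lemma latticeExt_apply_of_mem (f : ↥Lᶜ → ℂ) {z : ℂ} (hz : z ∈ L) : latticeExt L f z = 0 :=
  Function.extend_apply' (f := Subtype.val) f 0 z fun ⟨w, hw⟩ ↦ w.2 (hw.symm ▸ hz)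

lemma latticeExt_zero : latticeExt L 0 = 0 := Function.extend_zero _

lemma latticeExt_add (f g : ↥Lᶜ → ℂ) : latticeExt L (f + g) = latticeExt L f + latticeExt L g := by
  simpa [latticeExt] using Function.extend_add Subtype.val f g 0 0

lemma latticeExt_smul (a : ℂ) (f : ↥Lᶜ → ℂ) : latticeExt L (a • f) = a • latticeExt L f := by
  simpa [latticeExt] using Function.extend_smul a Subtype.val f 0

end latticeExt

lemma periodic_latticeExt {f : ↥(Λ.lattice : Set ℂ)ᶜ → ℂ} {l : ℂ} (hl : l ∈ Λ.lattice)
    (h : ∀ z ∈ (Λ.lattice : Set ℂ)ᶜ, latticeExt Λ.lattice f (z + l) = latticeExt Λ.lattice f z) :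
    (latticeExt Λ.lattice f).Periodic l := fun z ↦ by
  by_cases hz : z ∈ Λ.lattice
  · rw [latticeExt_apply_of_mem f hz, latticeExt_apply_of_mem f (add_mem hz hl)]
  · exact h z hz

lemma IsElliptic.latticeExt_domRestrict (hF : IsElliptic Λ F) :
    IsElliptic Λ (latticeExt Λ.lattice ((Λ.lattice : Set ℂ)ᶜ.domRestrict F)) := by
  have hperiodic {l : ℂ} (hl : l ∈ Λ.lattice) :
      (latticeExt Λ.lattice ((Λ.lattice : Set ℂ)ᶜ.domRestrict F)).Periodic l := by
    refine periodic_latticeExt hl fun z hz ↦ ?_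
    have hzl : z + l ∈ (Λ.lattice : Set ℂ)ᶜ := fun h ↦ hz ((Λ.lattice.add_mem_iff_left hl).mp h)
    simpa only [latticeExt_apply _ hz, latticeExt_apply _ hzl] using! hF.periodic hl z
  exact ⟨hF.differentiableOn.congr fun z hz ↦ latticeExt_apply _ hz,
    hperiodic Λ.ω₁_mem_lattice, hperiodic Λ.ω₂_mem_lattice⟩

lemma HasPolarCoeff.latticeExt_domRestrict {n : ℕ} (h : HasPolarCoeff F n c) :
    HasPolarCoeff (latticeExt Λ.lattice ((Λ.lattice : Set ℂ)ᶜ.domRestrict F)) n c :=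
  h.congr' <| (eventually_notMem_lattice Λ).mono fun _ hz ↦
    (latticeExt_apply ((Λ.lattice : Set ℂ)ᶜ.domRestrict F) hz).symm

/-- The space `Vₙ` of elliptic functions, as functions on the complement of the lattice, whose
poles are lattice points and have order at most `n`. -/
noncomputable def ellipticSpace (Λ : PeriodPair) (n : ℕ) :
    Submodule ℂ (↥(Λ.lattice : Set ℂ)ᶜ → ℂ) where
  carrier := {f | IsElliptic Λ (latticeExt Λ.lattice f) ∧
    ∃ c, HasPolarCoeff (latticeExt Λ.lattice f) n c}
  zero_mem' := by
    rw [Set.mem_ofPred_eq, latticeExt_zero]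
    exact ⟨.const Λ 0, 0, by simp [HasPolarCoeff]⟩
  add_mem' := by
    rintro f g ⟨hf, c, hc⟩ ⟨hg, d, hd⟩
    rw [Set.mem_ofPred_eq, latticeExt_add]
    exact ⟨hf.add hg, _, hc.add hd⟩
  smul_mem' := by
    rintro a f ⟨hf, c, hc⟩
    rw [Set.mem_ofPred_eq, latticeExt_smul]
    exact ⟨hf.const_smul a, _, hc.const_smul a⟩

/-- The coefficient of `z⁻ⁿ` in the Laurent expansion at `0` of a function in `Vₙ`. -/
noncomputable def polarCoeff (Λ : PeriodPair) (n : ℕ) : ellipticSpace Λ n →ₗ[ℂ] ℂ where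
  toFun f := f.2.2.choose
  map_add' f g := (f + g).2.2.choose_spec.unique <| by
    simpa only [Submodule.coe_add, latticeExt_add] using! f.2.2.choose_spec.add g.2.2.choose_spec
  map_smul' a f := (a • f).2.2.choose_spec.unique <| by
    simpa only [Submodule.coe_smul, latticeExt_smul] using! f.2.2.choose_spec.const_smul a

variable {n : ℕ}

lemma hasPolarCoeff_polarCoeff (f : ellipticSpace Λ n) :
    HasPolarCoeff (latticeExt Λ.lattice f) n (polarCoeff Λ n f) :=
  f.2.2.choose_spec

lemma ellipticSpace_le_succ (Λ : PeriodPair) (n : ℕ) :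
    ellipticSpace Λ n ≤ ellipticSpace Λ (n + 1) :=
  fun _ ⟨hf, _, hc⟩ ↦ ⟨hf, _, hc.succ⟩

lemma ker_polarCoeff_zero (Λ : PeriodPair) : (polarCoeff Λ 0).ker = ⊥ := by
  refine LinearMap.ker_eq_bot'.mpr fun f hf ↦ Subtype.ext (funext fun z ↦ ?_)
  have hcoeff := hasPolarCoeff_polarCoeff f
  rw [hf] at hcoeff
  exact (latticeExt_apply f.1 z.2).symm.trans (f.2.1.eq_of_hasPolarCoeff_zero hcoeff z.2)

lemma ker_polarCoeff_succ (Λ : PeriodPair) (n : ℕ) :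
    (polarCoeff Λ (n + 1)).ker = (ellipticSpace Λ n).submoduleOf (ellipticSpace Λ (n + 1)) := by
  ext f
  have hcoeff := hasPolarCoeff_polarCoeff f
  refine ⟨fun hf ↦ ⟨f.2.1, ?_⟩, fun ⟨_, _, hc⟩ ↦ hcoeff.unique hc.succ⟩
  rw [LinearMap.mem_ker.mp hf] at hcoeff
  exact hcoeff.exists_of_succ_zero f.2.1.eventually_differentiableAt

lemma polarCoeff_one (Λ : PeriodPair) : polarCoeff Λ 1 = 0 :=
  LinearMap.ext fun f ↦ f.2.1.eq_zero_of_hasPolarCoeff_one (hasPolarCoeff_polarCoeff f)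

lemma range_polarCoeff (Λ : PeriodPair) (hn : n ≠ 1) : (polarCoeff Λ n).range = ⊤ := by
  obtain ⟨F, c, hF, hc, hc0⟩ := exists_isElliptic_hasPolarCoeff_ne_zero Λ hn
  refine LinearMap.range_eq_top.mpr (LinearMap.surjective fun h ↦ hc0 ?_)
  let f : ellipticSpace Λ n := ⟨_, hF.latticeExt_domRestrict, c, hc.latticeExt_domRestrict⟩
  exact (hc.latticeExt_domRestrict.unique (hasPolarCoeff_polarCoeff f)).trans
    (LinearMap.congr_fun h f)

lemma rank_ellipticSpace_zero (Λ : PeriodPair) : Module.rank ℂ (ellipticSpace Λ 0) = 1 := by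
  rw [← (polarCoeff Λ 0).rank_range_add_rank_ker, range_polarCoeff Λ zero_ne_one,
    ker_polarCoeff_zero, rank_top, rank_bot, Module.rank_self, add_zero]

lemma rank_range_polarCoeff_add_rank_ellipticSpace (Λ : PeriodPair) (n : ℕ) :
    Module.rank ℂ (polarCoeff Λ (n + 1)).range + Module.rank ℂ (ellipticSpace Λ n) =
      Module.rank ℂ (ellipticSpace Λ (n + 1)) := by
  rw [← (polarCoeff Λ (n + 1)).rank_range_add_rank_ker, ker_polarCoeff_succ,
    (Submodule.submoduleOfEquivOfLe (ellipticSpace_le_succ Λ n)).rank_eq]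

lemma rank_ellipticSpace_succ (Λ : PeriodPair) (n : ℕ) :
    Module.rank ℂ (ellipticSpace Λ (n + 1)) = ↑(n + 1) := by
  induction n with
  | zero =>
    rw [← rank_range_polarCoeff_add_rank_ellipticSpace, zero_add, polarCoeff_one,
      LinearMap.range_zero, rank_bot, rank_ellipticSpace_zero, zero_add, Nat.cast_one]
  | succ n ih =>
    rw [← rank_range_polarCoeff_add_rank_ellipticSpace, range_polarCoeff Λ (by lia), rank_top,
      Module.rank_self, ih, Nat.cast_succ (n + 1), add_comm]

lemma mem_ellipticSpace_iff {f : ↥(Λ.lattice : Set ℂ)ᶜ → ℂ} :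
    f ∈ ellipticSpace Λ n ↔
      DifferentiableOn ℂ (latticeExt Λ.lattice f) (Λ.lattice : Set ℂ)ᶜ ∧
      (∀ z ∈ (Λ.lattice : Set ℂ)ᶜ,
        latticeExt Λ.lattice f (z + Λ.ω₁) = latticeExt Λ.lattice f z ∧
        latticeExt Λ.lattice f (z + Λ.ω₂) = latticeExt Λ.lattice f z) ∧
      (∃ ε > 0, (ball (0 : ℂ) ε \ {0}) ⊆ (Λ.lattice : Set ℂ)ᶜ ∧
        ∃ g : ℂ → ℂ, DifferentiableOn ℂ g (ball (0 : ℂ) ε) ∧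
          ∀ z ∈ ball (0 : ℂ) ε \ {0}, g z = z ^ n * latticeExt Λ.lattice f z) := by
  constructor
  · rintro ⟨hf, c, hc⟩
    obtain ⟨ε, hε, hball⟩ :=
      nhdsWithin_basis_ball.eventually_iff.mp (eventually_notMem_lattice Λ)
    refine ⟨hf.differentiableOn, fun z _ ↦ ⟨hf.periodic_ω₁ z, hf.periodic_ω₂ z⟩, ε, hε,
      fun z hz ↦ hball hz, _, hc.differentiableOn_update (ball_mem_nhds 0 hε)
        (hf.differentiableOn.mono fun z hz ↦ hball hz), fun z hz ↦ ?_⟩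
    exact Function.update_of_ne hz.2 _ _
  · rintro ⟨hd, hper, ε, hε, -, g, hg, hgf⟩
    exact ⟨⟨hd, periodic_latticeExt Λ.ω₁_mem_lattice fun z hz ↦ (hper z hz).1,
      periodic_latticeExt Λ.ω₂_mem_lattice fun z hz ↦ (hper z hz).2⟩,
      g 0, .of_differentiableOn_ball hε hg hgf⟩

lemma linearIndependent_one_of_im_ne_zero {ω : ℂ} (hω : ω.im ≠ 0) :
    LinearIndependent ℝ ![1, ω] := by
  refine (LinearIndependent.pair_iff' one_ne_zero).mpr fun a ha ↦ hω ?_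
  simp [← ha]

theorem elliptic_functions_of_order_le_n_dimension_general (Λ : PeriodPair) (n : ℕ) (hn : 1 ≤ n) :
    ∃ V : Submodule ℂ (↥(Λ.lattice : Set ℂ)ᶜ → ℂ),
      (V : Set (↥(Λ.lattice : Set ℂ)ᶜ → ℂ)) =
        {f : ↥(Λ.lattice : Set ℂ)ᶜ → ℂ |
          DifferentiableOn ℂ (latticeExt Λ.lattice f) (Λ.lattice : Set ℂ)ᶜ ∧
          (∀ z ∈ (Λ.lattice : Set ℂ)ᶜ,
            latticeExt Λ.lattice f (z + Λ.ω₁) = latticeExt Λ.lattice f z ∧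
            latticeExt Λ.lattice f (z + Λ.ω₂) = latticeExt Λ.lattice f z) ∧
          (∃ ε > 0, (ball (0 : ℂ) ε \ {0}) ⊆ (Λ.lattice : Set ℂ)ᶜ ∧
            ∃ g : ℂ → ℂ, DifferentiableOn ℂ g (ball (0 : ℂ) ε) ∧
              ∀ z ∈ ball (0 : ℂ) ε \ {0}, g z = z ^ n * latticeExt Λ.lattice f z)} ∧
      Module.finrank ℂ ↥V = n := by
  obtain ⟨k, rfl⟩ := Nat.exists_eq_add_of_le' hn
  exact ⟨ellipticSpace Λ (k + 1), Set.ext fun _ ↦ mem_ellipticSpace_iff,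
    Module.finrank_eq_of_rank_eq (rank_ellipticSpace_succ Λ k)⟩

/-- The space of elliptic functions with poles only at lattice points, of order at
most `n`, is a `ℂ`-linear subspace of dimension `n` of the space of all functions
`ℂ ∖ L → ℂ`. -/
theorem elliptic_functions_of_order_le_n_dimension
    (ω : ℂ) (hω : 0 < ω.im)
    (L : Set ℂ) (hL : L = {z : ℂ | ∃ m n : ℤ, z = (m : ℂ) + (n : ℂ) * ω})
    (n : ℕ) (hn : 1 ≤ n) :
    ∃ V : Submodule ℂ (↥(Lᶜ) → ℂ),
      (V : Set (↥(Lᶜ) → ℂ)) =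
        {f : ↥(Lᶜ) → ℂ |
          DifferentiableOn ℂ (latticeExt L f) Lᶜ ∧
          (∀ z ∈ Lᶜ, latticeExt L f (z + 1) = latticeExt L f z ∧
            latticeExt L f (z + ω) = latticeExt L f z) ∧
          (∃ ε > 0, (ball (0 : ℂ) ε \ {0}) ⊆ Lᶜ ∧
            ∃ g : ℂ → ℂ, DifferentiableOn ℂ g (ball (0 : ℂ) ε) ∧
              ∀ z ∈ ball (0 : ℂ) ε \ {0}, g z = z ^ n * latticeExt L f z)} ∧
      Module.finrank ℂ ↥V = n := by
  let Λ : PeriodPair := ⟨1, ω, linearIndependent_one_of_im_ne_zero hω.ne'⟩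
  obtain rfl : L = Λ.lattice := hL.trans <| Set.ext fun z ↦ by
    simp [PeriodPair.mem_lattice, Λ, eq_comm]
  exact elliptic_functions_of_order_le_n_dimension_general Λ n hn
end

section
/- Let n ≥ 2 be an integer, let f : ℂ ∖ L → ℂ be holomorphic and doubly periodic, and let c₁, c₂, …, cₙ ∈ ℂ. Suppose the function z ↦ f(z) + c₁/z + (cₙ·z + cₙ₋₁·z² + ⋯ + c₂·z^{n−1}) extends to a holomorphic function g on a ball B(0,ε) (with B(0,ε) ∖ {0} ⊆ ℂ ∖ L) whose zero at 0 has order at least n, i.e. g(z)/z^{n−1} → 0 as z → 0. Then f is identically 0 and c₁ = c₂ = ⋯ = cₙ = 0. (This is the analytic core of the paper's claim that the cochains 1/u₁^{n+1}·∂/∂ξ₁ ∧ ∂/∂u₁ and 1/u₁^{k}·∂/∂ξ₁ ∧ ∂/∂u₁, k = 1, …, n−1, together with ξ₁/u₁·∂/∂ξ₁ ∧ ∂/∂u₁, represent linearly independent classes in H¹(Sₙ, ∧²Θ).) -/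
open Metric Filter

/-!
Near `0` we have `f = a / z + o(1)` with `a = -c₁`. If `a ≠ 0`, then `a f' + f²` is elliptic and
bounded near `0`, hence equal to a constant `k²` by Liouville. A nonconstant elliptic function
takes every value, so `f z₀ = k` for some `z₀`; but `f - k` solves the linear equation
`u' = -((f + k) / a) u`, so it vanishes identically, contradicting the pole of `f` at `0`. Hence
`a = 0`, and `f = o(1)` at `0` forces `f = 0`. The remaining polynomial has degree at most `n - 1`
and is `o(z ^ (n - 1))`, so its coefficients vanish. The detour through a Riccati equation replaces
the contour integral that usually shows that the residue of `f` is zero.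
-/

open Topology Bornology

section LocalAnalysis

theorem tendsto_mul_pow_div_pow {𝕜 : Type*} [NormedField 𝕜] (b : 𝕜) {j k : ℕ} (hkj : k ≤ j) :
    Tendsto (fun z => b * z ^ j / z ^ k) (𝓝[≠] 0) (𝓝 (if j = k then b else 0)) := by
  have power : Tendsto (fun z : 𝕜 => b * z ^ (j - k)) (𝓝[≠] 0) (𝓝 (b * 0 ^ (j - k))) :=
    ((continuous_const.mul (continuous_pow _)).tendsto 0).mono_left nhdsWithin_le_nhds
  have limit_eq : b * 0 ^ (j - k) = if j = k then b else 0 := by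
    rcases hkj.eq_or_lt with rfl | hlt
    · simp
    · simp [hlt.ne', Nat.sub_ne_zero_of_lt hlt]
  rw [← limit_eq]
  refine power.congr' ?_
  filter_upwards [self_mem_nhdsWithin] with z (hz : z ≠ 0)
  rw [pow_sub₀ z hz hkj, mul_div_assoc, div_eq_mul_inv]

theorem tendsto_div_pow_of_le {𝕜 : Type*} [NormedField 𝕜] {g : 𝕜 → 𝕜} {k m : ℕ} (hkm : k ≤ m)
    (h : Tendsto (fun z => g z / z ^ m) (𝓝[≠] 0) (𝓝 0)) :
    Tendsto (fun z => g z / z ^ k) (𝓝[≠] 0) (𝓝 0) := by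
  have power : Tendsto (fun z : 𝕜 => z ^ (m - k)) (𝓝[≠] 0) (𝓝 (0 ^ (m - k))) :=
    ((continuous_pow _).tendsto 0).mono_left nhdsWithin_le_nhds
  have product := h.mul power
  rw [zero_mul] at product
  refine product.congr' ?_
  filter_upwards [self_mem_nhdsWithin] with z (hz : z ≠ 0)
  rw [← Nat.sub_add_cancel hkm, pow_add, Nat.add_sub_cancel]
  field_simp

theorem eq_zero_of_tendsto_sum_mul_pow_div_pow {𝕜 : Type*} [NontriviallyNormedField 𝕜]
    {s : Finset ℕ} {m : ℕ} (hs : ∀ k ∈ s, k ≤ m) {b : ℕ → 𝕜}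
    (h : Tendsto (fun z => (∑ k ∈ s, b k * z ^ k) / z ^ m) (𝓝[≠] 0) (𝓝 0)) :
    ∀ k ∈ s, b k = 0 := by
  intro k
  induction k using Nat.strong_induction_on with | _ k lower
  intro hk
  have quotient_tendsto_zero :
      Tendsto (fun z => (∑ j ∈ s, b j * z ^ j) / z ^ k) (𝓝[≠] 0) (𝓝 0) :=
    tendsto_div_pow_of_le (hs k hk) h
  have term_tendsto : ∀ j ∈ s,
      Tendsto (fun z => b j * z ^ j / z ^ k) (𝓝[≠] 0) (𝓝 (if j = k then b j else 0)) := by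
    intro j hj
    rcases lt_or_ge j k with hjk | hkj
    · simp [lower j hjk hj]
    · exact tendsto_mul_pow_div_pow (b j) hkj
  have quotient_tendsto_coeff := tendsto_finsetSum s term_tendsto
  rw [Finset.sum_ite_eq' s k, if_pos hk] at quotient_tendsto_coeff
  simp only [← Finset.sum_div] at quotient_tendsto_coeff
  exact tendsto_nhds_unique quotient_tendsto_coeff quotient_tendsto_zero

theorem eqOn_zero_of_deriv_eq_mul {U : Set ℂ} (hU : IsOpen U) (hUc : IsPreconnected U)
    {u v : ℂ → ℂ} (hu : DifferentiableOn ℂ u U) (hv : DifferentiableOn ℂ v U)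
    (hderiv : ∀ z ∈ U, deriv u z = v z * u z) {z₀ : ℂ} (hz₀ : z₀ ∈ U) (hu₀ : u z₀ = 0) :
    Set.EqOn u 0 U := by
  have u_analytic : AnalyticOnNhd ℂ u U := hu.analyticOnNhd hU
  have order_deriv : analyticOrderAt (deriv u) z₀ + 1 = analyticOrderAt u z₀ := by
    simpa [hu₀] using (u_analytic z₀ hz₀).analyticOrderAt_deriv_add_one
  have order_le : analyticOrderAt u z₀ ≤ analyticOrderAt (deriv u) z₀ := by
    have near : deriv u =ᶠ[𝓝 z₀] v * u := by
      filter_upwards [hU.mem_nhds hz₀] with z hz using hderiv z hz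
    rw [analyticOrderAt_congr near,
      analyticOrderAt_mul (hv.analyticOnNhd hU z₀ hz₀) (u_analytic z₀ hz₀)]
    exact le_add_self
  have order_top : analyticOrderAt u z₀ = ⊤ := by
    by_contra finite
    rw [← order_deriv] at order_le finite
    generalize analyticOrderAt (deriv u) z₀ = N at order_le finite
    cases N with
    | top => simp at finite
    | coe N => norm_cast at order_le; omega
  exact u_analytic.eqOn_zero_of_preconnected_of_eventuallyEq_zero hUc hz₀
    (analyticOrderAt_eq_top.mp order_top)

variable {f : ℂ → ℂ} {a : ℂ}

theorem exists_analyticAt_eventuallyEq_of_tendsto {b z₀ : ℂ}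
    (hf : ∀ᶠ z in 𝓝[≠] z₀, DifferentiableAt ℂ f z) (hlim : Tendsto f (𝓝[≠] z₀) (𝓝 b)) :
    ∃ r : ℂ → ℂ, AnalyticAt ℂ r z₀ ∧ r z₀ = b ∧ f =ᶠ[𝓝[≠] z₀] r := by
  have agree : f =ᶠ[𝓝[≠] z₀] Function.update f z₀ b := by
    filter_upwards [self_mem_nhdsWithin] with z hz
    rw [Function.update_of_ne hz]
  refine ⟨Function.update f z₀ b, ?_, Function.update_self z₀ b f, agree⟩
  refine Complex.analyticAt_of_differentiable_on_punctured_nhds_of_continuousAt ?_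
    (continuousAt_update_same.mpr hlim)
  filter_upwards [hf, eventually_nhdsNE_eventually_nhds_iff.mpr agree] with z hz near
  exact hz.congr_of_eventuallyEq (near.mono fun _ => Eq.symm)

-- Writing `f = a / z + r`, the double poles of `a f'` and `f ^ 2` cancel, and the simple pole
-- `2 a r(0) / z` of the sum vanishes because `r 0 = 0`.
theorem exists_tendsto_mul_deriv_add_sq (hf : ∀ᶠ z in 𝓝[≠] 0, DifferentiableAt ℂ f z)
    (hlim : Tendsto (fun z => f z - a / z) (𝓝[≠] 0) (𝓝 0)) :
    ∃ C, Tendsto (fun z => a * deriv f z + f z ^ 2) (𝓝[≠] 0) (𝓝 C) := by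
  obtain ⟨r, hr, hr₀, hfr⟩ := exists_analyticAt_eventuallyEq_of_tendsto
    (f := fun z => f z - a / z) (by
      filter_upwards [hf, self_mem_nhdsWithin] with z hz (hz₀ : z ≠ 0)
      exact hz.sub ((differentiableAt_const a).div differentiableAt_id hz₀)) hlim
  have f_eq : f =ᶠ[𝓝[≠] 0] fun z => a / z + r z :=
    hfr.mono fun z hz => by linear_combination hz
  have deriv_f_eq : ∀ᶠ z in 𝓝[≠] (0 : ℂ), deriv f z = -a / z ^ 2 + deriv r z := by
    filter_upwards [f_eq.nhdsNE_deriv, self_mem_nhdsWithin,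
      nhdsWithin_le_nhds hr.eventually_analyticAt] with z hz (hz₀ : z ≠ 0) hrz
    have expansion : HasDerivAt (fun z => a / z + r z) (-a / z ^ 2 + deriv r z) z := by
      simpa only [div_eq_mul_inv, neg_mul, mul_neg] using
        ((hasDerivAt_inv hz₀).const_mul a).fun_add hrz.differentiableAt.hasDerivAt
    rw [hz, expansion.deriv]
  have slope_lim : Tendsto (fun z => r z / z) (𝓝[≠] 0) (𝓝 (deriv r 0)) := by
    simpa [slope_fun_def_field, hr₀] using hr.differentiableAt.hasDerivAt.tendsto_slope
  have r_lim : Tendsto r (𝓝[≠] 0) (𝓝 (r 0)) := hr.continuousAt.mono_left nhdsWithin_le_nhds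
  have deriv_lim : Tendsto (deriv r) (𝓝[≠] 0) (𝓝 (deriv r 0)) :=
    hr.deriv.continuousAt.mono_left nhdsWithin_le_nhds
  refine ⟨_, (((deriv_lim.const_mul a).add (slope_lim.const_mul (2 * a))).add
    (r_lim.pow 2)).congr' ?_⟩
  filter_upwards [f_eq, deriv_f_eq, self_mem_nhdsWithin] with z hz hz' (hz₀ : z ≠ 0)
  rw [hz, hz']
  field_simp
  ring

theorem tendsto_cobounded_of_tendsto_sub_div (ha : a ≠ 0) {b : ℂ}
    (hlim : Tendsto (fun z => f z - a / z) (𝓝[≠] 0) (𝓝 b)) :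
    Tendsto f (𝓝[≠] 0) (cobounded ℂ) := by
  have pole : Tendsto (fun z : ℂ => ‖a / z‖) (𝓝[≠] 0) atTop := by
    rw [tendsto_norm_atTop_iff_cobounded]
    exact ((tendsto_mul_left_cobounded ha).comp tendsto_inv₀_nhdsNE_zero).congr fun z =>
      (div_eq_mul_inv a z).symm
  rw [← tendsto_norm_atTop_iff_cobounded]
  refine tendsto_atTop_mono (fun z => ?_) (pole.atTop_add hlim.norm.neg)
  have triangle := norm_sub_norm_le (a / z) (f z)
  rw [norm_sub_rev] at triangle
  linarith

end LocalAnalysis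

section Lattice

theorem isOpen_compl_of_discreteTopology {E : Type*} [AddCommGroup E] [TopologicalSpace E]
    [IsTopologicalAddGroup E] [T2Space E] (Λ : Submodule ℤ E) [DiscreteTopology Λ] :
    IsOpen (Λ : Set E)ᶜ :=
  (@AddSubgroup.isClosed_of_discrete _ _ _ _ _ Λ.toAddSubgroup
    (inferInstanceAs (DiscreteTopology Λ))).isOpen_compl

theorem eventually_nhdsNE_zero_notMem {E : Type*} [AddCommGroup E] [TopologicalSpace E]
    (Λ : Submodule ℤ E) [DiscreteTopology Λ] : ∀ᶠ z in 𝓝[≠] 0, z ∉ Λ := by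
  obtain ⟨U, hU, disjoint⟩ := disjoint_nhdsWithin_of_mem_discrete (s := (Λ : Set E)) ⟨‹_›⟩
    (zero_mem Λ)
  exact mem_of_superset hU fun z hz => Set.disjoint_left.mp disjoint hz

theorem isPreconnected_compl_of_discreteTopology {E : Type*} [AddCommGroup E] [Module ℝ E]
    [TopologicalSpace E] [ContinuousAdd E] [ContinuousSMul ℝ E] [SecondCountableTopology E]
    (hE : 1 < Module.rank ℝ E) (Λ : Submodule ℤ E) [DiscreteTopology Λ] :
    IsPreconnected (Λ : Set E)ᶜ :=
  (Set.Countable.isConnected_compl_of_one_lt_rank hE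
    (countable_of_Lindelof_of_discrete : Countable Λ)).isPreconnected

theorem periodic_piecewise_const {E α : Type*} [AddCommGroup E] {Λ : Submodule ℤ E}
    [DecidablePred (· ∈ (Λ : Set E))] {f : E → α} {l : E} (hl : l ∈ Λ)
    (hper : ∀ z ∉ Λ, f (z + l) = f z) (c : α) :
    Function.Periodic ((Λ : Set E).piecewise (fun _ => c) f) l := by
  intro z
  have mem_iff : z + l ∈ Λ ↔ z ∈ Λ := Submodule.add_mem_iff_left Λ hl
  by_cases hz : z ∈ Λ <;> simp [mem_iff, hz, hper]

variable {Λ : Submodule ℤ ℂ} [DiscreteTopology Λ] {f : ℂ → ℂ} {a : ℂ}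

theorem differentiable_piecewise_of_periodic_of_tendsto [DecidablePred (· ∈ (Λ : Set ℂ))]
    (hf : DifferentiableOn ℂ f (Λ : Set ℂ)ᶜ) (hper : ∀ l ∈ Λ, ∀ z ∉ Λ, f (z + l) = f z) {c : ℂ}
    (hlim : Tendsto f (𝓝[≠] 0) (𝓝 c)) :
    Differentiable ℂ ((Λ : Set ℂ).piecewise (fun _ => c) f) := by
  set F := (Λ : Set ℂ).piecewise (fun _ => c) f
  have F_of_notMem : ∀ z ∉ Λ, F z = f z := fun z hz => Set.piecewise_eq_of_notMem _ _ _ hz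
  have compl_open : IsOpen (Λ : Set ℂ)ᶜ := isOpen_compl_of_discreteTopology Λ
  have f_differentiableAt : ∀ z ∉ Λ, DifferentiableAt ℂ f z := fun z hz =>
    hf.differentiableAt (compl_open.mem_nhds hz)
  have near_zero := eventually_nhdsNE_zero_notMem Λ
  have F_differentiableAt_zero : DifferentiableAt ℂ F 0 := by
    obtain ⟨r, hr, hr₀, hfr⟩ :=
      exists_analyticAt_eventuallyEq_of_tendsto (near_zero.mono f_differentiableAt) hlim
    have F_zero : F 0 = c := Set.piecewise_eq_of_mem _ _ _ (zero_mem Λ)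
    refine hr.differentiableAt.congr_of_eventuallyEq
      (eventuallyEq_nhds_of_eventuallyEq_nhdsNE ?_ (F_zero.trans hr₀.symm))
    filter_upwards [near_zero, hfr] with z hz hfrz
    rw [F_of_notMem z hz, hfrz]
  intro z
  by_cases hz : z ∈ Λ
  · have translate : (fun w => F (w + -z)) = F :=
      (periodic_piecewise_const (neg_mem hz) (hper _ (neg_mem hz)) c).funext
    rw [← translate, differentiableAt_comp_add_const, add_neg_cancel]
    exact F_differentiableAt_zero
  · refine (f_differentiableAt z hz).congr_of_eventuallyEq ?_
    filter_upwards [compl_open.mem_nhds hz] with w hw using F_of_notMem w hw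

variable [IsZLattice ℝ Λ]

theorem eq_of_periodic_of_tendsto (hf : DifferentiableOn ℂ f (Λ : Set ℂ)ᶜ)
    (hper : ∀ l ∈ Λ, ∀ z ∉ Λ, f (z + l) = f z) {c : ℂ} (hlim : Tendsto f (𝓝[≠] 0) (𝓝 c)) :
    ∀ z ∉ Λ, f z = c := by
  classical
  intro z hz
  have extension_differentiable := differentiable_piecewise_of_periodic_of_tendsto hf hper hlim
  have extension_bounded := (IsZLattice.isCompact_range_of_periodic Λ _
    extension_differentiable.continuous
    fun w l hl => periodic_piecewise_const hl (hper l hl) c w).isBounded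
  simpa [hz] using
    extension_differentiable.apply_eq_apply_of_bounded extension_bounded z 0

theorem exists_eq_of_periodic_of_tendsto_cobounded (hf : DifferentiableOn ℂ f (Λ : Set ℂ)ᶜ)
    (hper : ∀ l ∈ Λ, ∀ z ∉ Λ, f (z + l) = f z) (hlim : Tendsto f (𝓝[≠] 0) (cobounded ℂ)) (k : ℂ) :
    ∃ z ∉ Λ, f z = k := by
  by_contra! omitted
  have inv_sub_eq_zero : ∀ z ∉ Λ, (f z - k)⁻¹ = 0 := by
    refine eq_of_periodic_of_tendsto ?_ (fun l hl z hz => by rw [hper l hl z hz])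
      (tendsto_inv₀_cobounded.comp ((tendsto_sub_const_cobounded k).comp hlim))
    exact (hf.sub_const k).inv fun z hz => sub_ne_zero.mpr (omitted z hz)
  obtain ⟨z, hz⟩ := (eventually_nhdsNE_zero_notMem Λ).exists
  exact omitted z hz (sub_eq_zero.mp (inv_eq_zero.mp (inv_sub_eq_zero z hz)))

theorem exists_mul_deriv_add_sq_eq_of_periodic (hf : DifferentiableOn ℂ f (Λ : Set ℂ)ᶜ)
    (hper : ∀ l ∈ Λ, ∀ z ∉ Λ, f (z + l) = f z)
    (hlim : Tendsto (fun z => f z - a / z) (𝓝[≠] 0) (𝓝 0)) :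
    ∃ C, ∀ z ∉ Λ, a * deriv f z + f z ^ 2 = C := by
  have compl_open : IsOpen (Λ : Set ℂ)ᶜ := isOpen_compl_of_discreteTopology Λ
  have differentiable_near : ∀ᶠ z in 𝓝[≠] 0, DifferentiableAt ℂ f z :=
    (eventually_nhdsNE_zero_notMem Λ).mono fun z hz =>
      hf.differentiableAt (compl_open.mem_nhds hz)
  obtain ⟨C, hC⟩ := exists_tendsto_mul_deriv_add_sq differentiable_near hlim
  refine ⟨C, eq_of_periodic_of_tendsto (((hf.deriv compl_open).const_mul a).add (hf.pow 2))
    (fun l hl z hz => ?_) hC⟩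
  have deriv_periodic : deriv f (z + l) = deriv f z := by
    rw [← deriv_comp_add_const]
    refine EventuallyEq.deriv_eq ?_
    filter_upwards [compl_open.mem_nhds hz] with w hw using hper l hl w hw
  change a * deriv f (z + l) + f (z + l) ^ 2 = a * deriv f z + f z ^ 2
  rw [deriv_periodic, hper l hl z hz]

theorem residue_eq_zero_of_periodic (hf : DifferentiableOn ℂ f (Λ : Set ℂ)ᶜ)
    (hper : ∀ l ∈ Λ, ∀ z ∉ Λ, f (z + l) = f z)
    {b : ℂ} (hlim : Tendsto (fun z => f z - a / z) (𝓝[≠] 0) (𝓝 b)) :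
    a = 0 := by
  wlog hb : b = 0 generalizing f b
  · refine this (hf.sub_const b) (fun l hl z hz => by rw [hper l hl z hz]) (b := 0) ?_ rfl
    simpa only [sub_right_comm, sub_self] using hlim.sub_const b
  subst hb
  by_contra ha
  have pole : Tendsto f (𝓝[≠] 0) (cobounded ℂ) := tendsto_cobounded_of_tendsto_sub_div ha hlim
  obtain ⟨C, riccati⟩ := exists_mul_deriv_add_sq_eq_of_periodic hf hper hlim
  obtain ⟨k, rfl⟩ : ∃ k, k ^ 2 = C := IsAlgClosed.exists_pow_nat_eq C two_pos
  obtain ⟨z₀, hz₀, hfz₀⟩ := exists_eq_of_periodic_of_tendsto_cobounded hf hper pole k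
  have linear_ode : ∀ z ∈ (Λ : Set ℂ)ᶜ,
      deriv (fun z => f z - k) z = -(f z + k) / a * (f z - k) := by
    intro z hz
    rw [deriv_sub_const]
    field_simp
    linear_combination riccati z hz
  have f_eq_k : Set.EqOn (fun z => f z - k) 0 (Λ : Set ℂ)ᶜ :=
    eqOn_zero_of_deriv_eq_mul (isOpen_compl_of_discreteTopology Λ)
      (isPreconnected_compl_of_discreteTopology (by simp [Complex.rank_real_complex]) Λ)
      (hf.sub_const k) ((hf.add_const k).neg.div_const a) linear_ode hz₀ (sub_eq_zero.mpr hfz₀)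
  have f_tendsto_k : Tendsto f (𝓝[≠] 0) (𝓝 k) := by
    refine tendsto_const_nhds.congr' ?_
    filter_upwards [eventually_nhdsNE_zero_notMem Λ] with z hz
    exact (sub_eq_zero.mp (f_eq_k hz)).symm
  exact f_tendsto_k.not_tendsto (disjoint_nhds_cobounded k) pole

end Lattice

section PeriodPair

theorem add_lattice_eq_of_add_periods_eq {P : PeriodPair} {α : Type*} {f : ℂ → α}
    (hper : ∀ z ∉ P.lattice, f (z + P.ω₁) = f z ∧ f (z + P.ω₂) = f z) :
    ∀ l ∈ P.lattice, ∀ z ∉ P.lattice, f (z + l) = f z := by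
  classical
  intro l hl z hz
  have h₁ := periodic_piecewise_const P.ω₁_mem_lattice (fun w hw => (hper w hw).1) (f z)
  have h₂ := periodic_piecewise_const P.ω₂_mem_lattice (fun w hw => (hper w hw).2) (f z)
  have zl_notMem : z + l ∉ P.lattice := mt (Submodule.add_mem_iff_left P.lattice hl).mp hz
  obtain ⟨m, n, rfl⟩ := PeriodPair.mem_lattice.mp hl
  simpa [hz, zl_notMem] using ((h₁.int_mul m).add_period (h₂.int_mul n)) z

theorem elliptic_function_coefficients_vanish_general (P : PeriodPair) (n : ℕ)
    (f : ℂ → ℂ) (c : ℕ → ℂ) (hf : DifferentiableOn ℂ f (P.lattice : Set ℂ)ᶜ)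
    (hper : ∀ z ∉ P.lattice, f (z + P.ω₁) = f z ∧ f (z + P.ω₂) = f z)
    (hlim : Tendsto (fun z => (f z + c 1 / z +
      ∑ k ∈ Finset.Icc 1 (n - 1), c (n + 1 - k) * z ^ k) / z ^ (n - 1)) (𝓝[≠] 0) (𝓝 0)) :
    (∀ z ∉ P.lattice, f z = 0) ∧ ∀ k ∈ Finset.Icc 1 n, c k = 0 := by
  have periodic := add_lattice_eq_of_add_periods_eq hper
  have principal_part : Tendsto (fun z => f z - -c 1 / z) (𝓝[≠] 0) (𝓝 0) := by
    have total := tendsto_div_pow_of_le (Nat.zero_le _) hlim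
    have polynomial_lim :
        Tendsto (fun z => ∑ k ∈ Finset.Icc 1 (n - 1), c (n + 1 - k) * z ^ k) (𝓝 0) (𝓝 0) := by
      refine Continuous.tendsto' (by fun_prop) 0 0 (Finset.sum_eq_zero fun k hk => ?_)
      rw [zero_pow (Nat.one_le_iff_ne_zero.mp (Finset.mem_Icc.mp hk).1), mul_zero]
    have difference := total.sub (polynomial_lim.mono_left nhdsWithin_le_nhds)
    rw [sub_zero] at difference
    exact difference.congr fun z => by ring
  have c_one : c 1 = 0 := neg_eq_zero.mp (residue_eq_zero_of_periodic hf periodic principal_part)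
  have f_eq_zero : ∀ z ∉ P.lattice, f z = 0 :=
    eq_of_periodic_of_tendsto hf periodic (by simpa [c_one] using principal_part)
  have sum_lim : Tendsto (fun z => (∑ k ∈ Finset.Icc 1 (n - 1), c (n + 1 - k) * z ^ k) /
      z ^ (n - 1)) (𝓝[≠] 0) (𝓝 0) := by
    refine hlim.congr' ?_
    filter_upwards [eventually_nhdsNE_zero_notMem P.lattice] with z hz
    rw [f_eq_zero z hz, c_one, zero_div, add_zero, zero_add]
  have coeff_eq_zero := eq_zero_of_tendsto_sum_mul_pow_div_pow
    (fun k hk => (Finset.mem_Icc.mp hk).2) sum_lim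
  refine ⟨f_eq_zero, fun k hk => ?_⟩
  obtain ⟨one_le, le_n⟩ := Finset.mem_Icc.mp hk
  rcases one_le.eq_or_lt with rfl | one_lt
  · exact c_one
  · have reflected := coeff_eq_zero (n + 1 - k) (Finset.mem_Icc.mpr ⟨by omega, by omega⟩)
    rwa [Nat.sub_sub_self (by omega)] at reflected

/-- The period pair `(1, ω)` of the normalised lattice `ℤ + ℤ ω`, so that Mathlib's lattice API
applies to it. -/
def normalizedPeriodPair (ω : ℂ) (hω : ω.im ≠ 0) : PeriodPair where
  ω₁ := 1
  ω₂ := ω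
  indep := by
    refine LinearIndependent.pair_iff.mpr fun s t h => ?_
    have t_eq_zero : t = 0 := by simpa [hω] using congrArg Complex.im h
    subst t_eq_zero
    exact ⟨by simpa using h, rfl⟩

theorem coe_lattice_normalizedPeriodPair (ω : ℂ) (hω : ω.im ≠ 0) :
    ((normalizedPeriodPair ω hω).lattice : Set ℂ) =
      {z : ℂ | ∃ m n : ℤ, z = (m : ℂ) + (n : ℂ) * ω} := by
  ext z
  simp [PeriodPair.mem_lattice, normalizedPeriodPair, eq_comm]

end PeriodPair

/-- Linear independence of the cochain classes in `H¹(Sₙ, ∧²Θ)`: if a doubly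
periodic function `f`, holomorphic off the lattice `L`, is such that
`f z + c₁/z + (cₙ z + cₙ₋₁ z² + ⋯ + c₂ z^{n-1})` extends holomorphically across `0`
with a zero of order at least `n`, then `f = 0` and `c₁ = ⋯ = cₙ = 0`. -/
theorem elliptic_function_coefficients_vanish
    (ω : ℂ) (hω : 0 < ω.im)
    (L : Set ℂ) (hL : L = {z : ℂ | ∃ m n : ℤ, z = (m : ℂ) + (n : ℂ) * ω})
    (n : ℕ) (hn : 2 ≤ n)
    (f : ℂ → ℂ) (c : ℕ → ℂ)
    (hf : DifferentiableOn ℂ f Lᶜ)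
    (hper : ∀ z ∉ L, f (z + 1) = f z ∧ f (z + ω) = f z)
    (hext : ∃ ε > 0, (ball (0 : ℂ) ε \ {0}) ⊆ Lᶜ ∧
      ∃ g : ℂ → ℂ, DifferentiableOn ℂ g (ball (0 : ℂ) ε) ∧
        (∀ z ∈ ball (0 : ℂ) ε \ {0},
          g z = f z + c 1 / z + ∑ k ∈ Finset.Icc 1 (n - 1), c (n + 1 - k) * z ^ k) ∧
        Tendsto (fun z => g z / z ^ (n - 1)) (nhdsWithin 0 {(0 : ℂ)}ᶜ) (nhds 0)) :
    (∀ z ∉ L, f z = 0) ∧ ∀ k ∈ Finset.Icc 1 n, c k = 0 := by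
  obtain ⟨ε, hε, -, g, -, hg, hlim⟩ := hext
  have lattice_eq := hL.trans (coe_lattice_normalizedPeriodPair ω hω.ne').symm
  subst lattice_eq
  refine elliptic_function_coefficients_vanish_general _ n f c hf hper (hlim.congr' ?_)
  filter_upwards [sdiff_mem_nhdsWithin_compl (ball_mem_nhds 0 hε) _] with z hz
  rw [hg z hz]
end
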